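/- The 2-cochain ψ on 𝒟^N defined by ψ(t^i[D]_j A, t^k[D]_l B) = δ_{i,−k}(−1)^j j! l! binom(i+j, j+l+1) tr(AB), where [D]_j = D(D−1)⋯(D−j+1), is a 2-cocycle on the Lie algebra 𝒟^N; equivalently, the bracket [x + λC, y + μC] = [x,y]_{𝒟^N} + ψ(x,y)C on 𝒟̂^N = 𝒟^N ⊕ ℂC is skew-symmetric and satisfies the Jacobi identity, so 𝒟̂^N is a Lie algebra and a central extension of 𝒟^N by ℂC. -/

import Mathlib

noncomputable section

open scoped BigOperators

/-- Falling factorial `[b]_s = b(b-1)⋯(b-s+1)` of an integer `b`. -/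
def dfall (b : ℤ) (s : ℕ) : ℤ := ∏ i ∈ Finset.range s, (b - (i : ℤ))

/-- Generalized binomial coefficient `binom(a, n)` as a complex number, for `a : ℤ`, `n : ℕ`. -/
def cbinom (a : ℤ) (n : ℕ) : ℂ :=
  (∏ i ∈ Finset.range n, ((a : ℂ) - (i : ℂ))) / (n.factorial : ℂ)

/-- The coefficient `δ_{i,-k} (-1)^j j! l! binom(i+j, j+l+1)` of the central element in the
bracket of `t^a (d/dt)^j A = t^i [D]_j A` (with `a = i + j`) and `t^b (d/dt)^l B = t^k [D]_l B`
(with `b = k + l`); it is still to be multiplied by `tr (AB)`. -/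
def cocycleCoeff (a : ℤ) (j : ℕ) (b : ℤ) (l : ℕ) : ℂ :=
  if a + b = (j : ℤ) + (l : ℤ) then
    (-1 : ℂ) ^ j * (j.factorial : ℂ) * (l.factorial : ℂ) * cbinom a (j + l + 1)
  else 0

/-- A module over the universal central extension `𝒟̂^N` of the Lie algebra of `N × N`-matrix
differential operators on the circle, presented through the action `ρ a j A` of the basis
elements `t^a (d/dt)^j A = t^{a-j} [D]_j A` (`a ∈ ℤ`, `j ∈ ℕ`, `A ∈ gl_N(ℂ)`) together with the
action `cC` of the central element `C`, subject to bilinearity in `A` and the commutation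
relations (2.3)/(3.12) of the paper. -/
structure DhatModule (N : ℕ) (V : Type*) [AddCommGroup V] [Module ℂ V] where
  ρ : ℤ → ℕ → Matrix (Fin N) (Fin N) ℂ → Module.End ℂ V
  cC : Module.End ℂ V
  ρ_add : ∀ a j A B, ρ a j (A + B) = ρ a j A + ρ a j B
  ρ_smul : ∀ a j (c : ℂ) A, ρ a j (c • A) = c • ρ a j A
  cC_comm : ∀ a j A, cC * ρ a j A = ρ a j A * cC
  bracket_rel : ∀ (a : ℤ) (j : ℕ) (A : Matrix (Fin N) (Fin N) ℂ) (b : ℤ) (l : ℕ)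
      (B : Matrix (Fin N) (Fin N) ℂ),
    ρ a j A * ρ b l B - ρ b l B * ρ a j A =
      ((∑ s ∈ Finset.range (j + 1),
        ((j.choose s : ℂ) * (dfall b s : ℂ)) • ρ (a + b - (s : ℤ)) (j + l - s) (A * B))
      - (∑ s ∈ Finset.range (l + 1),
        ((l.choose s : ℂ) * (dfall a s : ℂ)) • ρ (a + b - (s : ℤ)) (j + l - s) (B * A)))
      + (cocycleCoeff a j b l * (A * B).trace) • cC

namespace DhatModule

variable {N : ℕ} {V : Type*} [AddCommGroup V] [Module ℂ V]

/-- A subspace invariant under the `𝒟̂^N`-action. -/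
def IsSub (M : DhatModule N V) (U : Submodule ℂ V) : Prop :=
  (∀ a j A, ∀ v ∈ U, M.ρ a j A v ∈ U) ∧ ∀ v ∈ U, M.cC v ∈ U

/-- The module is trivial: `𝒟̂^N` acts by zero. -/
def IsTrivial (M : DhatModule N V) : Prop :=
  (∀ a j A (v : V), M.ρ a j A v = 0) ∧ ∀ v : V, M.cC v = 0

/-- Irreducibility: the module is nonzero and has no invariant subspace besides `⊥` and `⊤`. -/
def IsIrreducible (M : DhatModule N V) : Prop :=
  (⊥ : Submodule ℂ V) ≠ ⊤ ∧ ∀ U : Submodule ℂ V, M.IsSub U → U = ⊥ ∨ U = ⊤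

/-- Indecomposability: the module is nonzero and is not the direct sum of two nonzero
invariant subspaces. -/
def IsIndecomposable (M : DhatModule N V) : Prop :=
  (⊥ : Submodule ℂ V) ≠ ⊤ ∧ ∀ U W : Submodule ℂ V, M.IsSub U → M.IsSub W →
    U ⊓ W = ⊥ → U ⊔ W = ⊤ → U = ⊥ ∨ W = ⊥

end DhatModule

/-- Falling factorial `[x]_j = x(x-1)⋯(x-j+1)` in `ℂ`. -/
def cfall (x : ℂ) (j : ℕ) : ℂ := ∏ s ∈ Finset.range j, (x - (s : ℂ))

/-- The underlying space `ℂ^N[t,t⁻¹]`; the coefficient of `t^k` is stored at index `k`. -/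
abbrev MN (N : ℕ) : Type := ℤ →₀ (Fin N → ℂ)

/-- The operator `t^i D^j A` on `ℂ^N[t,t⁻¹]` (where `D = t d/dt`):
`t^i D^j A ⬝ (t^k v) = k^j t^{i+k} (A v)`.  This realizes `𝒟^N` faithfully as operators. -/
def gen (N : ℕ) (i : ℤ) (j : ℕ) (A : Matrix (Fin N) (Fin N) ℂ) : Module.End ℂ (MN N) :=
  Finsupp.lsum ℂ fun k : ℤ => (Finsupp.lsingle (k + i)) ∘ₗ (((k : ℂ) ^ j) • A.mulVecLin)

/-- The operator `t^i [D]_j A` on `ℂ^N[t,t⁻¹]`, where `[D]_j = D(D-1)⋯(D-j+1) = t^j(d/dt)^j`: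
`t^k v ↦ [k]_j t^{i+k} (A v)`. -/
def genD (N : ℕ) (i : ℤ) (j : ℕ) (A : Matrix (Fin N) (Fin N) ℂ) : Module.End ℂ (MN N) :=
  Finsupp.lsum ℂ fun k : ℤ => (Finsupp.lsingle (k + i)) ∘ₗ (cfall (k : ℂ) j • A.mulVecLin)

/-- `𝒟^N`, realized as the span of the operators `t^i [D]_j A`. -/
def DNspan (N : ℕ) : Submodule ℂ (Module.End ℂ (MN N)) :=
  Submodule.span ℂ
    {x : Module.End ℂ (MN N) |
      ∃ (i : ℤ) (j : ℕ) (A : Matrix (Fin N) (Fin N) ℂ), x = genD N i j A}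

/-!
Let `p` be the projection of `ℂ^N[t,t⁻¹]` onto `ℂ^N[t]`. The commutator of `p` with a differential
operator has finite rank, and `ψ(x, y) = Tr([p, x] y)`. Writing `δ = [p, ·]`, a derivation, the
skew-symmetry of `ψ` says `Tr δ(xy) = 0` and the cocycle identity says `Tr δ(zxy) = 0`; both hold
because `δ(a)` has vanishing diagonal blocks with respect to `p`. On generators, the trace is a
sum of `[n]_j [n+i]_l` over the `n` whose sign is changed by `n ↦ n + i`, and Pascal's rule
evaluates it, with both signs of `i` treated at once.
-/

section TraceCocycle

theorem lie_mul_right {A : Type*} [Ring A] (p a b : A) : ⁅p, a * b⁆ = ⁅p, a⁆ * b + a * ⁅p, b⁆ := by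
  simp only [Ring.lie_def]
  noncomm_ring

variable {R A : Type*} [CommRing R] [Ring A] [Algebra R A]

/-- A linear functional on an algebra is a trace on a two-sided ideal `I` if it does not
distinguish the two products of an element of `I` with an element of the algebra. -/
def IsTraceOn (τ : A →ₗ[R] R) (I : TwoSidedIdeal A) : Prop :=
  ∀ x ∈ I, ∀ a, τ (x * a) = τ (a * x)

variable (R) in
/-- The subalgebra of the elements of `A` which commute with `p` modulo `I`. -/
def commutingModulo (I : TwoSidedIdeal A) (p : A) : Subalgebra R A where
  carrier := {a | ⁅p, a⁆ ∈ I}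
  mul_mem' {a b} ha hb := by
    rw [Set.mem_ofPred_eq, lie_mul_right]
    exact I.add_mem (I.mul_mem_right _ _ ha) (I.mul_mem_left _ _ hb)
  add_mem' {a b} ha hb := by
    have lie_add : ⁅p, a + b⁆ = ⁅p, a⁆ + ⁅p, b⁆ := by simp only [Ring.lie_def]; noncomm_ring
    rw [Set.mem_ofPred_eq, lie_add]
    exact I.add_mem ha hb
  algebraMap_mem' r := by
    rw [Set.mem_ofPred_eq, (Algebra.commute_algebraMap_right r p).lie_eq]
    exact I.zero_mem

theorem mem_commutingModulo {I : TwoSidedIdeal A} {p a : A} :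
    a ∈ commutingModulo R I p ↔ ⁅p, a⁆ ∈ I := Iff.rfl

/-- The bilinear form `(x, y) ↦ τ([p, x] y)`. For a projection `p` and a trace `τ` on an ideal `I`
it is a cyclic cocycle on the elements commuting with `p` modulo `I`. -/
def traceCocycle (τ : A →ₗ[R] R) (p : A) : A →ₗ[R] A →ₗ[R] R :=
  (LinearMap.mul R A).compr₂ τ ∘ₗ (LinearMap.mulLeft R p - LinearMap.mulRight R p)

theorem traceCocycle_apply (τ : A →ₗ[R] R) (p x y : A) :
    traceCocycle τ p x y = τ (⁅p, x⁆ * y) := rfl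

variable {τ : A →ₗ[R] R} {I : TwoSidedIdeal A} {p : A}

theorem IsTraceOn.map_lie_eq_zero (hτ : IsTraceOn τ I) (hp : IsIdempotentElem p) {a : A}
    (ha : a ∈ commutingModulo R I p) : τ ⁅p, a⁆ = 0 := by
  have hpp : p * p = p := hp
  have block_eq_zero : p * (⁅p, a⁆ * p) = 0 := by
    simp only [Ring.lie_def, mul_sub, sub_mul, mul_assoc, hpp, ← mul_assoc p p, sub_self]
  have lie_eq : ⁅p, a⁆ = p * ⁅p, a⁆ + ⁅p, a⁆ * p := by
    simp only [Ring.lie_def, mul_sub, sub_mul, mul_assoc, hpp, ← mul_assoc p p]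
    abel
  have right_eq_zero : τ (⁅p, a⁆ * p) = 0 := by
    calc τ (⁅p, a⁆ * p) = τ (⁅p, a⁆ * p * p) := by rw [mul_assoc, hpp]
      _ = τ (p * (⁅p, a⁆ * p)) := hτ _ (I.mul_mem_right _ _ ha) p
      _ = 0 := by rw [block_eq_zero, map_zero]
  rw [lie_eq, map_add, ← hτ _ ha, right_eq_zero, add_zero]

theorem traceCocycle_skew (hτ : IsTraceOn τ I) (hp : IsIdempotentElem p) {x y : A}
    (hx : x ∈ commutingModulo R I p) (hy : y ∈ commutingModulo R I p) :
    traceCocycle τ p x y = -traceCocycle τ p y x := by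
  rw [eq_neg_iff_add_eq_zero, traceCocycle_apply, traceCocycle_apply, hτ _ hy, ← map_add,
    ← lie_mul_right]
  exact hτ.map_lie_eq_zero hp (mul_mem hx hy)

theorem traceCocycle_cyclic (hτ : IsTraceOn τ I) (hp : IsIdempotentElem p) {x y z : A}
    (hx : x ∈ commutingModulo R I p) (hy : y ∈ commutingModulo R I p)
    (hz : z ∈ commutingModulo R I p) :
    traceCocycle τ p (x * y) z + traceCocycle τ p (y * z) x + traceCocycle τ p (z * x) y = 0 := by
  have leibniz : ⁅p, z * x * y⁆ = ⁅p, z⁆ * (x * y) + z * ⁅p, x⁆ * y + z * x * ⁅p, y⁆ := by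
    rw [lie_mul_right, lie_mul_right, add_mul, mul_assoc ⁅p, z⁆]
  have rotate_x : τ (⁅p, x⁆ * (y * z)) = τ (z * ⁅p, x⁆ * y) := by
    rw [← mul_assoc, hτ _ (I.mul_mem_right _ _ hx), mul_assoc]
  have rotate_y : τ (⁅p, y⁆ * (z * x)) = τ (z * x * ⁅p, y⁆) := hτ _ hy _
  have total : τ ⁅p, z * x * y⁆ = 0 := hτ.map_lie_eq_zero hp (mul_mem (mul_mem hz hx) hy)
  rw [leibniz, map_add, map_add, ← rotate_x, ← rotate_y] at total
  rw [traceCocycle_skew hτ hp (mul_mem hx hy) hz, traceCocycle_skew hτ hp (mul_mem hy hz) hx,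
    traceCocycle_skew hτ hp (mul_mem hz hx) hy]
  simp only [traceCocycle_apply]
  linear_combination -total

theorem traceCocycle_jacobi (hτ : IsTraceOn τ I) (hp : IsIdempotentElem p) {x y z : A}
    (hx : x ∈ commutingModulo R I p) (hy : y ∈ commutingModulo R I p)
    (hz : z ∈ commutingModulo R I p) :
    traceCocycle τ p ⁅x, y⁆ z + traceCocycle τ p ⁅y, z⁆ x + traceCocycle τ p ⁅z, x⁆ y = 0 := by
  have cyclic := traceCocycle_cyclic hτ hp hx hy hz
  have cyclic' := traceCocycle_cyclic hτ hp hy hx hz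
  simp only [Ring.lie_def, map_sub, LinearMap.sub_apply]
  linear_combination cyclic - cyclic'

end TraceCocycle

section FiniteRank

open TensorProduct

theorem dualTensorHom_injective (R M N : Type*) [CommRing R] [AddCommGroup M] [Module R M]
    [AddCommGroup N] [Module R N] [Module.Free R N] :
    Function.Injective (dualTensorHom R M N) := by
  let b := Module.Free.chooseBasis R N
  refine (injective_iff_map_eq_zero _).2 fun t ht => ?_
  obtain ⟨c, rfl⟩ := TensorProduct.eq_repr_basis_right b t
  have c_eq_zero : c = 0 := by
    ext i m
    by_cases hi : c i = 0
    · rw [hi, Finsupp.zero_apply]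
    · simpa [Finsupp.sum, Finsupp.single_apply, hi] using
        congrArg (b.coord i) (LinearMap.congr_fun ht m)
  rw [c_eq_zero, Finsupp.sum_zero_index]

section Comp

variable {R U V W : Type*} [CommRing R] [AddCommGroup U] [Module R U] [AddCommGroup V] [Module R V]
  [AddCommGroup W] [Module R W]

theorem comp_mem_range_dualTensorHom (g : W →ₗ[R] U) {f : V →ₗ[R] W}
    (hf : f ∈ LinearMap.range (dualTensorHom R V W)) :
    g ∘ₗ f ∈ LinearMap.range (dualTensorHom R V U) := by
  obtain ⟨t, rfl⟩ := hf
  exact ⟨g.lTensor _ t, LinearMap.congr_fun (dualTensorHom_comp_lTensor g) t⟩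

theorem mem_range_dualTensorHom_comp (g : U →ₗ[R] V) {f : V →ₗ[R] W}
    (hf : f ∈ LinearMap.range (dualTensorHom R V W)) :
    f ∘ₗ g ∈ LinearMap.range (dualTensorHom R U W) := by
  obtain ⟨t, rfl⟩ := hf
  exact ⟨g.dualMap.rTensor _ t, LinearMap.congr_fun (dualTensorHom_comp_rTensor_dualMap g) t⟩

end Comp

variable {K V W : Type*} [Field K] [AddCommGroup V] [Module K V] [AddCommGroup W] [Module K W]

variable (K V) in
/-- The two-sided ideal of endomorphisms of finite rank, encoded as the finite sums of
endomorphisms `v ↦ φ v • w`. -/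
def finiteRankIdeal : TwoSidedIdeal (Module.End K V) :=
  .mk' (LinearMap.range (dualTensorHom K V V)) (zero_mem _) add_mem neg_mem
    (comp_mem_range_dualTensorHom _) (mem_range_dualTensorHom_comp _)

theorem mem_finiteRankIdeal {f : Module.End K V} :
    f ∈ finiteRankIdeal K V ↔ f ∈ LinearMap.range (dualTensorHom K V V) :=
  TwoSidedIdeal.mem_mk' ..

variable (K V) in
/-- The trace of endomorphisms of finite rank of a vector space of arbitrary dimension, extended
to a linear functional on all endomorphisms. The extension is an arbitrary choice: only the values
on `finiteRankIdeal K V` are meaningful. -/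
def finiteRankTrace : Module.End K V →ₗ[K] K :=
  contractLeft K V ∘ₗ
    LinearMap.leftInverse (V := Module.Dual K V ⊗[K] V) (dualTensorHom K V V)

theorem finiteRankTrace_dualTensorHom (t : Module.Dual K V ⊗[K] V) :
    finiteRankTrace K V (dualTensorHom K V V t) = contractLeft K V t :=
  congrArg (contractLeft K V) <|
    LinearMap.leftInverse_apply_of_inj (LinearMap.ker_eq_bot.2 (dualTensorHom_injective K V V)) t

theorem finiteRankTrace_comp_comm {f : V →ₗ[K] W}
    (hf : f ∈ LinearMap.range (dualTensorHom K V W)) (g : W →ₗ[K] V) :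
    finiteRankTrace K W (f ∘ₗ g) = finiteRankTrace K V (g ∘ₗ f) := by
  obtain ⟨t, rfl⟩ := hf
  induction t with
  | zero => simp
  | add s t hs ht => simp only [map_add, LinearMap.add_comp, LinearMap.comp_add, hs, ht]
  | tmul φ w =>
    have left : dualTensorHom K V W (φ ⊗ₜ w) ∘ₗ g = dualTensorHom K W W ((φ ∘ₗ g) ⊗ₜ w) := by
      ext; simp
    have right : g ∘ₗ dualTensorHom K V W (φ ⊗ₜ w) = dualTensorHom K V V (φ ⊗ₜ g w) := by
      ext; simp
    rw [left, right, finiteRankTrace_dualTensorHom, finiteRankTrace_dualTensorHom]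
    simp

theorem isTraceOn_finiteRankTrace :
    IsTraceOn (finiteRankTrace K V) (finiteRankIdeal K V) := fun _ hf g =>
  finiteRankTrace_comp_comm (mem_finiteRankIdeal.1 hf) g

theorem finiteRankTrace_eq_trace [FiniteDimensional K V] :
    finiteRankTrace K V = LinearMap.trace K V := by
  ext f
  obtain ⟨t, rfl⟩ := dualTensorHom_bijective.2 f
  rw [finiteRankTrace_dualTensorHom, LinearMap.trace_eq_contract_apply]

end FiniteRank

section WeightedShift

variable {G R M : Type*} [AddCommGroup G] [CommRing R] [AddCommGroup M] [Module R M]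

/-- The operator `t^n v ↦ f n • t^(n+i) (A v)` on `M[t^G]`, the coefficient of `t^n` being stored
at index `n`. -/
def weightedShift (i : G) (f : G → R) (A : Module.End R M) : Module.End R (G →₀ M) :=
  Finsupp.lsum R fun n => Finsupp.lsingle (n + i) ∘ₗ (f n • A)

@[simp]
theorem weightedShift_single (i : G) (f : G → R) (A : Module.End R M) (n : G) (v : M) :
    weightedShift i f A (Finsupp.single n v) = Finsupp.single (n + i) (f n • A v) := by
  simp [weightedShift]

theorem weightedShift_mul (i k : G) (f g : G → R) (A B : Module.End R M) :
    weightedShift i f A * weightedShift k g B =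
      weightedShift (i + k) (fun n => f (n + k) * g n) (A * B) := by
  refine Finsupp.lhom_ext fun n v => ?_
  simp only [Module.End.mul_apply, weightedShift_single, map_smul, smul_smul, add_assoc,
    add_comm k i]

theorem weightedShift_sub (i : G) (f g : G → R) (A : Module.End R M) :
    weightedShift i f A - weightedShift i g A = weightedShift i (f - g) A := by
  refine Finsupp.lhom_ext fun n v => ?_
  simp [sub_smul]

theorem weightedShift_eq_sum (i : G) (f : G → R) (A : Module.End R M)
    (s : Finset G) (hs : Function.support f ⊆ s) :
    weightedShift i f A = ∑ n ∈ s, Finsupp.lsingle (n + i) ∘ₗ (f n • A) ∘ₗ Finsupp.lapply n := by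
  refine Finsupp.lhom_ext fun m v => ?_
  have f_eq_zero : m ∉ s → f m = 0 := fun hm => by simpa using mt (@hs m) hm
  rw [weightedShift_single, LinearMap.sum_apply, Finset.sum_eq_single m]
  · simp
  · intro n _ hn
    simp [Ne.symm hn]
  · intro hm
    simp [f_eq_zero hm]

variable {K : Type*} [Field K] [Module K M] [FiniteDimensional K M]

theorem weightedShift_mem_finiteRankIdeal (i : G) {f : G → K} (hf : (Function.support f).Finite)
    (A : Module.End K M) : weightedShift i f A ∈ finiteRankIdeal K (G →₀ M) := by
  rw [mem_finiteRankIdeal, weightedShift_eq_sum i f A hf.toFinset hf.coe_toFinset.ge]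
  exact Submodule.sum_mem _ fun n _ =>
    comp_mem_range_dualTensorHom _ (mem_range_dualTensorHom_comp _ (dualTensorHom_bijective.2 _))

theorem finiteRankTrace_weightedShift [DecidableEq G] (i : G) {f : G → K}
    (hf : (Function.support f).Finite) (A : Module.End K M) :
    finiteRankTrace K (G →₀ M) (weightedShift i f A) =
      if i = 0 then (∑ᶠ n, f n) * LinearMap.trace K M A else 0 := by
  have block_trace (n : G) : finiteRankTrace K (G →₀ M)
      (Finsupp.lsingle (n + i) ∘ₗ (f n • A) ∘ₗ Finsupp.lapply n) =
        if i = 0 then f n * LinearMap.trace K M A else 0 := by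
    have compression : ((f n • A) ∘ₗ Finsupp.lapply n) ∘ₗ Finsupp.lsingle (n + i) =
        if i = 0 then f n • A else 0 := by
      ext v
      split_ifs with h <;> simp [h]
    rw [finiteRankTrace_comp_comm (dualTensorHom_bijective.2 _), compression,
      finiteRankTrace_eq_trace]
    split_ifs <;> simp
  rw [weightedShift_eq_sum i f A hf.toFinset hf.coe_toFinset.ge, map_sum,
    finsum_eq_sum_of_support_subset f hf.coe_toFinset.ge]
  simp only [block_trace]
  split_ifs
  · rw [Finset.sum_mul]
  · exact Finset.sum_const_zero

end WeightedShift

section SignedSum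

/-- The weight `[n + i ≥ 0] - [n ≥ 0]` of the sign change from `n` to `n + i`. -/
def signJump (R : Type*) [Ring R] (i n : ℤ) : R :=
  Set.indicator (Set.Ici 0) 1 (n + i) - Set.indicator (Set.Ici 0) 1 n

/-- The sum of `F n` over `-i ≤ n < 0`, or minus its sum over `0 ≤ n < -i` if `i` is negative. -/
def signedSum {R : Type*} [Ring R] (i : ℤ) (F : ℤ → R) : R := ∑ᶠ n, signJump R i n * F n

variable {R : Type*} [Ring R]

theorem support_signJump_finite (i : ℤ) : (Function.support (signJump R i)).Finite := by
  refine (Set.finite_Icc (-|i|) |i|).subset fun n hn => ?_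
  by_contra outside
  refine hn ?_
  have same_sign : 0 ≤ n + i ↔ 0 ≤ n := by
    rw [Set.mem_Icc] at outside
    grind
  simp [signJump, Set.indicator_apply, same_sign]

theorem signJump_succ (i n : ℤ) :
    signJump R (i + 1) n = signJump R i n + if n = -(i + 1) then 1 else 0 := by
  simp only [signJump, Set.indicator_apply, Set.mem_Ici, Pi.one_apply]
  grind

theorem support_signJump_mul_finite (i : ℤ) (F : ℤ → R) :
    (Function.support fun n => signJump R i n * F n).Finite :=
  (support_signJump_finite i).subset (Function.support_mul_subset_left _ _)

theorem signedSum_zero (F : ℤ → R) : signedSum 0 F = 0 := by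
  simp [signedSum, signJump]

theorem signedSum_add (i : ℤ) (F G : ℤ → R) :
    signedSum i (F + G) = signedSum i F + signedSum i G := by
  simp only [signedSum, Pi.add_apply, mul_add]
  exact finsum_add_distrib (support_signJump_mul_finite i F) (support_signJump_mul_finite i G)

theorem signedSum_mul_const (i : ℤ) (F : ℤ → R) (c : R) :
    signedSum i (fun n => F n * c) = signedSum i F * c := by
  simp only [signedSum, ← mul_assoc]
  exact (finsum_mul' _ _ (support_signJump_mul_finite i F)).symm

theorem signedSum_succ (i : ℤ) (F : ℤ → R) :
    signedSum (i + 1) F = signedSum i F + F (-(i + 1)) := by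
  have new_term : ∑ᶠ n, (if n = -(i + 1) then 1 else 0) * F n = F (-(i + 1)) := by
    rw [finsum_eq_single _ (-(i + 1)) fun n hn => by rw [if_neg hn, zero_mul], if_pos rfl, one_mul]
  simp only [signedSum, signJump_succ, add_mul]
  rw [finsum_add_distrib (support_signJump_mul_finite i F), new_term]
  exact (Set.finite_singleton (-(i + 1))).subset <|
    (Function.support_mul_subset_left _ _).trans fun n hn => of_not_not fun h => hn (if_neg h)

end SignedSum

section Binomial

@[elab_as_elim]
theorem int_induction_succ_iff {motive : ℤ → Prop} (i : ℤ) (zero : motive 0)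
    (succ_iff : ∀ i, motive (i + 1) ↔ motive i) : motive i := by
  induction i with
  | zero => exact zero
  | succ i ih => exact (succ_iff i).2 ih
  | pred i ih => exact (succ_iff _).1 (by rwa [sub_add_cancel])

variable {R : Type*} [CommRing R] [BinomialRing R]

theorem factorial_mul_choose (r : R) (n : ℕ) :
    (n.factorial : R) * Ring.choose r n = ∏ s ∈ Finset.range n, (r - s) := by
  rw [← nsmul_eq_mul, ← Ring.descPochhammer_eq_factorial_smul_choose, ← Polynomial.aeval_eq_smeval,
    Polynomial.aeval_def, Polynomial.eval₂_eq_eval_map, descPochhammer_map,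
    descPochhammer_eval_eq_prod_range]

theorem choose_neg_succ (r : R) (n : ℕ) :
    Ring.choose (-(r + 1)) n = (-1) ^ n * Ring.choose (r + n) n := by
  rw [Ring.choose_neg, Units.smul_def, zsmul_eq_mul, Int.cast_negOnePow_natCast]
  ring_nf

theorem choose_intCast_succ (m : ℤ) (n : ℕ) :
    Ring.choose ((m + 1 : ℤ) : R) (n + 1) =
      Ring.choose (m : R) (n + 1) + Ring.choose (m : R) n := by
  rw [Int.cast_add, Int.cast_one, Ring.choose_succ_succ, add_comm]

theorem signedSum_choose_mul_choose_succ (i : ℤ) (j l : ℕ) :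
    signedSum (i + 1)
        (fun n => Ring.choose (n : R) j * Ring.choose ((n + (i + 1) : ℤ) : R) (l + 1)) =
      signedSum i (fun n => Ring.choose (n : R) j * Ring.choose ((n + i : ℤ) : R) (l + 1)) +
        signedSum i (fun n => Ring.choose (n : R) j * Ring.choose ((n + i : ℤ) : R) l) := by
  have boundary_eq_zero : Ring.choose ((-(i + 1) + (i + 1) : ℤ) : R) (l + 1) = 0 := by
    rw [neg_add_cancel, Int.cast_zero, Ring.choose_zero_succ]
  rw [signedSum_succ, boundary_eq_zero, mul_zero, add_zero, ← signedSum_add]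
  simp only [← add_assoc, choose_intCast_succ, mul_add]
  rfl

-- Both sides vanish at `i = 0` and change by the same amount from `i` to `i + 1`.
theorem signedSum_choose_mul_choose (i : ℤ) (j l : ℕ) :
    signedSum i (fun n => Ring.choose (n : R) j * Ring.choose ((n + i : ℤ) : R) l) =
      (-1) ^ j * Ring.choose ((i + j : ℤ) : R) (j + l + 1) := by
  have right_zero {m : ℕ} (hm : j < m) : Ring.choose ((0 + j : ℤ) : R) m = 0 := by
    rw [zero_add, Int.cast_natCast, Ring.choose_natCast, Nat.choose_eq_zero_of_lt hm, Nat.cast_zero]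
  induction l generalizing i with
  | zero =>
    induction i using int_induction_succ_iff with
    | zero => rw [signedSum_zero, right_zero (by lia), mul_zero]
    | succ_iff i =>
      have new_term : Ring.choose ((-(i + 1) : ℤ) : R) j =
          (-1) ^ j * Ring.choose ((i + j : ℤ) : R) j := by
        exact_mod_cast choose_neg_succ (i : R) j
      simp only [Ring.choose_zero_right, mul_one, add_zero, signedSum_succ, new_term]
      rw [add_right_comm i, choose_intCast_succ, mul_add, add_left_inj]
  | succ l ih =>
    induction i using int_induction_succ_iff with
    | zero => rw [signedSum_zero, right_zero (by lia), mul_zero]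
    | succ_iff i =>
      rw [signedSum_choose_mul_choose_succ, ih, add_right_comm i, choose_intCast_succ, mul_add]
      exact add_left_inj _

end Binomial

section HalfLine

variable (R M : Type*) [CommRing R] [AddCommGroup M] [Module R M]

/-- The projection of `M[t,t⁻¹]` onto `M[t]` along `t⁻¹M[t⁻¹]`. -/
def halfLineProjection : Module.End R (ℤ →₀ M) :=
  weightedShift 0 (Set.indicator (Set.Ici 0) 1) 1

theorem isIdempotentElem_halfLineProjection : IsIdempotentElem (halfLineProjection R M) := by
  have indicator_mul_self (n : ℤ) : Set.indicator (Set.Ici 0) (1 : ℤ → R) n *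
      Set.indicator (Set.Ici 0) 1 n = Set.indicator (Set.Ici 0) 1 n := by
    rw [Set.indicator_apply]
    split_ifs <;> simp
  simp only [IsIdempotentElem, halfLineProjection, weightedShift_mul, add_zero, mul_one,
    indicator_mul_self]

variable {R M}

theorem halfLineProjection_lie_weightedShift (i : ℤ) (f : ℤ → R) (A : Module.End R M) :
    ⁅halfLineProjection R M, weightedShift i f A⁆ =
      weightedShift i (fun n => signJump R i n * f n) A := by
  rw [Ring.lie_def, halfLineProjection, weightedShift_mul, weightedShift_mul, zero_add, add_zero,
    one_mul, mul_one, weightedShift_sub]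
  congr 1
  ext n
  simp only [Pi.sub_apply, signJump, add_zero, sub_mul, mul_comm (f n)]

variable {K : Type*} [Field K] [Module K M] [FiniteDimensional K M]

theorem weightedShift_mem_commutingModulo (i : ℤ) (f : ℤ → K) (A : Module.End K M) :
    weightedShift i f A ∈
      commutingModulo K (finiteRankIdeal K (ℤ →₀ M)) (halfLineProjection K M) := by
  rw [mem_commutingModulo, halfLineProjection_lie_weightedShift]
  exact weightedShift_mem_finiteRankIdeal i (support_signJump_mul_finite i f) A

theorem traceCocycle_weightedShift (i k : ℤ) (f g : ℤ → K) (A B : Module.End K M) :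
    traceCocycle (finiteRankTrace K (ℤ →₀ M)) (halfLineProjection K M)
        (weightedShift i f A) (weightedShift k g B) =
      if i + k = 0 then
        signedSum i (fun n => f n * g (n + i)) * LinearMap.trace K M (A * B) else 0 := by
  have finite_support :
      (Function.support fun n => signJump K i (n + k) * f (n + k) * g n).Finite :=
    ((support_signJump_mul_finite i f).preimage (add_left_injective k).injOn).subset
      fun n hn => left_ne_zero_of_mul hn
  rw [traceCocycle_apply, halfLineProjection_lie_weightedShift, weightedShift_mul,
    finiteRankTrace_weightedShift _ finite_support]
  split_ifs with hik
  · obtain rfl := eq_neg_of_add_eq_zero_right hik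
    rw [← finsum_comp_equiv (Equiv.addRight i), signedSum]
    simp only [Equiv.coe_addRight, add_neg_cancel_right, mul_assoc]
  · rfl

end HalfLine

section MatrixDifferentialOperators

theorem cfall_eq (x : ℂ) (j : ℕ) : cfall x j = j.factorial * Ring.choose x j :=
  (factorial_mul_choose x j).symm

theorem cbinom_eq (a : ℤ) (n : ℕ) : cbinom a n = Ring.choose (a : ℂ) n := by
  rw [cbinom, ← factorial_mul_choose, mul_div_cancel_left₀]
  exact_mod_cast n.factorial_ne_zero

theorem signedSum_cfall_mul_cfall (i : ℤ) (j l : ℕ) :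
    signedSum i (fun n => cfall (n : ℂ) j * cfall ((n + i : ℤ) : ℂ) l) =
      (-1) ^ j * j.factorial * l.factorial * cbinom (i + j) (j + l + 1) := by
  have binomials (n : ℤ) : cfall (n : ℂ) j * cfall ((n + i : ℤ) : ℂ) l =
      Ring.choose (n : ℂ) j * Ring.choose ((n + i : ℤ) : ℂ) l * (j.factorial * l.factorial) := by
    rw [cfall_eq, cfall_eq]
    ring
  simp only [binomials, signedSum_mul_const, signedSum_choose_mul_choose, cbinom_eq]
  push_cast
  ring

theorem genD_eq_weightedShift (N : ℕ) (i : ℤ) (j : ℕ) (A : Matrix (Fin N) (Fin N) ℂ) :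
    genD N i j A = weightedShift i (fun n => cfall n j) A.mulVecLin := rfl

theorem DNspan_le_commutingModulo (N : ℕ) :
    DNspan N ≤ (commutingModulo ℂ (finiteRankIdeal ℂ (MN N))
      (halfLineProjection ℂ (Fin N → ℂ))).toSubmodule := by
  rw [DNspan, Submodule.span_le]
  rintro _ ⟨i, j, A, rfl⟩
  exact weightedShift_mem_commutingModulo i _ _

theorem traceCocycle_genD (N : ℕ) (i : ℤ) (j : ℕ) (A : Matrix (Fin N) (Fin N) ℂ)
    (k : ℤ) (l : ℕ) (B : Matrix (Fin N) (Fin N) ℂ) :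
    traceCocycle (finiteRankTrace ℂ (MN N)) (halfLineProjection ℂ (Fin N → ℂ))
        (genD N i j A) (genD N k l B) =
      cocycleCoeff (i + j) j (k + l) l * (A * B).trace := by
  have opposite_iff : i + j + (k + l) = (j : ℤ) + l ↔ i + k = 0 := by lia
  have trace_mul : LinearMap.trace ℂ (Fin N → ℂ) (A.mulVecLin * B.mulVecLin) = (A * B).trace := by
    rw [Module.End.mul_eq_comp, ← Matrix.mulVecLin_mul]
    exact Matrix.trace_toLin'_eq _
  simp only [genD_eq_weightedShift, traceCocycle_weightedShift, signedSum_cfall_mul_cfall,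
    trace_mul, cocycleCoeff, opposite_iff, ite_mul, zero_mul]

end MatrixDifferentialOperators

/-- The 2-cochain `ψ` on `𝒟^N` with
`ψ(t^i[D]_j A, t^k[D]_l B) = δ_{i,-k} (-1)^j j! l! binom(i+j, j+l+1) tr(AB)` is a 2-cocycle:
its bilinear extension `Ψ` is skew-symmetric and satisfies the cocycle identity on `𝒟^N`;
equivalently, the bracket `[(x,λ), (y,μ)] = ([x,y], Ψ(x,y))` on `𝒟̂^N = 𝒟^N ⊕ ℂC` is
skew-symmetric and satisfies the Jacobi identity, so `𝒟̂^N` is a Lie algebra and a central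
extension of `𝒟^N` by `ℂC`. -/
theorem psi_is_two_cocycle (N : ℕ) (hN : 1 ≤ N) :
    ∃ Ψ : Module.End ℂ (MN N) →ₗ[ℂ] Module.End ℂ (MN N) →ₗ[ℂ] ℂ,
      (∀ (i : ℤ) (j : ℕ) (A : Matrix (Fin N) (Fin N) ℂ) (k : ℤ) (l : ℕ)
          (B : Matrix (Fin N) (Fin N) ℂ),
        Ψ (genD N i j A) (genD N k l B) =
          cocycleCoeff (i + (j : ℤ)) j (k + (l : ℤ)) l * (A * B).trace) ∧
      (∀ x ∈ DNspan N, ∀ y ∈ DNspan N, Ψ x y = -Ψ y x) ∧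
      (∀ x ∈ DNspan N, ∀ y ∈ DNspan N, ∀ z ∈ DNspan N,
        Ψ ⁅x, y⁆ z + Ψ ⁅y, z⁆ x + Ψ ⁅z, x⁆ y = 0) := by
  let p := halfLineProjection ℂ (Fin N → ℂ)
  have trace := isTraceOn_finiteRankTrace (K := ℂ) (V := MN N)
  have projection : IsIdempotentElem p := isIdempotentElem_halfLineProjection ℂ (Fin N → ℂ)
  have commuting := DNspan_le_commutingModulo N
  refine ⟨traceCocycle (finiteRankTrace ℂ (MN N)) p, traceCocycle_genD N, ?_, ?_⟩
  · intro x hx y hy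
    exact traceCocycle_skew trace projection (commuting hx) (commuting hy)
  · intro x hx y hy z hz
    exact traceCocycle_jacobi trace projection (commuting hx) (commuting hy) (commuting hz)
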